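/- arXiv:1701.01849 — 2 statements merged into one kernel-verified Lean document; each statement's English description precedes it below -/
import Mathlib

section
/- Q-rank over a directed union: suppose V = ⋃_{i ∈ I} V_i, where {V_i}_{i ∈ I} is a nonempty directed family of linear subspaces of V (for all i, j ∈ I there is m ∈ I with V_i ⊆ V_m and V_j ⊆ V_m, and the supremum of the V_i is all of V). Then for every cubic form f on V, qrank(f) = sup_{i ∈ I} qrank(f|_{V_i}) in ℕ ∪ {∞}. -/
open scoped BigOperators

/-- The q-rank of a function `f : V → k`: the least `r` such that
`f = ∑ i in Fin r, ℓᵢ · qᵢ` with `ℓᵢ` linear functionals and `qᵢ` quadratic forms,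
as an element of `ℕ∞` (`⊤` if no such expression exists). -/
noncomputable def qrank (k : Type*) [Field k] {V : Type*} [AddCommGroup V] [Module k V]
    (f : V → k) : ℕ∞ :=
  sInf {r : ℕ∞ | ∃ m : ℕ, r = m ∧
    ∃ (ℓ : Fin m → (V →ₗ[k] k)) (q : Fin m → QuadraticForm k V),
      ∀ v, f v = ∑ i, ℓ i v * q i v}

/-- `f : V → k` is a cubic form: `f v = T (v,v,v)` for a symmetric trilinear map `T`. -/
def IsCubicForm (k : Type*) [Field k] {V : Type*} [AddCommGroup V] [Module k V]
    (f : V → k) : Prop :=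
  ∃ T : V →ₗ[k] V →ₗ[k] V →ₗ[k] k,
    (∀ x y z, T x y z = T y x z) ∧ (∀ x y z, T x y z = T x z y) ∧ ∀ v, f v = T v v v

/-!
Write `f v = T v v v`. Then `f` has q-rank at most `r` exactly when `f` vanishes on a subspace of
codimension at most `r`. So suppose every `𝒱 i` contains a subspace `W i` of codimension at most `r`
on which `f` vanishes; the subspaces `W i` need not be compatible, and a limit of them has to be
taken, as one would do in a Grassmannian using its completeness.

Choose an ultrafilter on `I` which contains `{i | v ∈ 𝒱 i}` for every `v`. Since `k` is
algebraically closed, the ultrapower of `k` has a `k`-valued place: a minimal valuation ring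
containing `k` has residue field algebraic over `k`, because otherwise it could be composed with a
nontrivial valuation ring of its residue field. The place assigns limits to some families of scalars
indexed by `I`, and hence of vectors. The limits of families `x i ∈ W i` form a subspace on which
`f` vanishes. Its codimension is at most `r`: among `r + 1` vectors there is for almost all `i` a
nontrivial relation modulo `W i`, and dividing its coefficients by the one of largest valuation
makes them have limits, one of which is `1`.
-/

open IsLocalRing

section Place

variable {R k K : Type*} [CommRing R] [Field k] [Field K]

theorem mem_map_comap_residue_iff {B : ValuationSubring K} {C : ValuationSubring (ResidueField B)}
    {x : K} : x ∈ (C.toSubring.comap (residue B)).map B.subtype ↔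
      ∃ hx : x ∈ B, residue B ⟨x, hx⟩ ∈ C := by
  constructor
  · rintro ⟨b, hb, rfl⟩
    exact ⟨b.2, hb⟩
  · rintro ⟨hx, hxC⟩
    exact ⟨⟨x, hx⟩, hxC, rfl⟩

theorem residue_inv_eq_zero_of_notMem {B : ValuationSubring K} {x : K} (hx : x ∉ B)
    (hx' : x⁻¹ ∈ B) : residue B ⟨x⁻¹, hx'⟩ = 0 := by
  rw [residue_eq_zero_iff, ← ValuationSubring.coe_mem_nonunits_iff]
  exact B.inv_mem_nonunits_iff.2 (.inr hx)

/-- The composite of a valuation ring `B` of `K` with a valuation ring `C` of its residue field: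
the preimage of `C` in `B`. -/
def compositeValuationSubring (B : ValuationSubring K) (C : ValuationSubring (ResidueField B)) :
    ValuationSubring K :=
  .ofSubring ((C.toSubring.comap (residue B)).map B.subtype) fun x => by
    simp only [mem_map_comap_residue_iff]
    by_cases hx : x ∈ B
    · by_cases hx' : x⁻¹ ∈ B
      · rcases eq_or_ne x 0 with rfl | hx0
        · exact .inl ⟨hx, (map_zero (residue B)).symm ▸ C.zero_mem⟩
        have hmul : residue B ⟨x, hx⟩ * residue B ⟨x⁻¹, hx'⟩ = 1 := by
          rw [← map_mul, ← map_one (residue B)]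
          exact congrArg _ (Subtype.ext (mul_inv_cancel₀ hx0))
        have hinv := eq_inv_of_mul_eq_one_right hmul
        exact (C.mem_or_inv_mem _).imp (⟨hx, ·⟩) fun h => ⟨hx', hinv ▸ h⟩
      · have hzero := residue_inv_eq_zero_of_notMem hx' (by rwa [inv_inv])
        simp only [inv_inv] at hzero
        exact .inl ⟨hx, hzero ▸ C.zero_mem⟩
    · have hx' := (B.mem_or_inv_mem x).resolve_left hx
      exact .inr ⟨hx', residue_inv_eq_zero_of_notMem hx hx' ▸ C.zero_mem⟩

theorem mem_compositeValuationSubring_iff {B : ValuationSubring K}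
    {C : ValuationSubring (ResidueField B)} {x : K} :
    x ∈ compositeValuationSubring B C ↔ ∃ hx : x ∈ B, residue B ⟨x, hx⟩ ∈ C :=
  mem_map_comap_residue_iff

theorem mem_sInf_or_inv_mem_sInf_of_isChain {𝒞 : Set (ValuationSubring K)}
    (h𝒞 : IsChain (· ≤ ·) 𝒞) (x : K) :
    x ∈ sInf (ValuationSubring.toSubring '' 𝒞) ∨ x⁻¹ ∈ sInf (ValuationSubring.toSubring '' 𝒞) := by
  simp only [Subring.mem_sInf, Set.forall_mem_image, ValuationSubring.mem_toSubring]
  by_contra! ⟨⟨A, hA, hxA⟩, B, hB, hxB⟩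
  have hxA' := (A.mem_or_inv_mem x).resolve_left hxA
  have hxB' := (B.mem_or_inv_mem x).resolve_right hxB
  rcases h𝒞.total hA hB with hAB | hBA
  · exact hxB (hAB hxA')
  · exact hxA (hBA hxB')

theorem exists_minimal_valuationSubring (S : Set K) :
    ∃ B : ValuationSubring K, Minimal (fun B : ValuationSubring K => S ⊆ B) B := by
  refine zorn_le₀ (α := (ValuationSubring K)ᵒᵈ) {B | S ⊆ B.ofDual} fun 𝒞 h𝒞S h𝒞 => ?_
  let M := ValuationSubring.ofSubring _ (mem_sInf_or_inv_mem_sInf_of_isChain (𝒞 := 𝒞) h𝒞.symm)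
  refine ⟨.toDual M, fun x hx => ?_, fun B hB x hx => ?_⟩
  · exact Subring.mem_sInf.2 (Set.forall_mem_image.2 fun B hB => h𝒞S hB hx)
  · exact Subring.mem_sInf.1 hx _ (Set.mem_image_of_mem _ hB)

theorem isIntegral_residue_comp_of_minimal {i : R →+* K} {B : ValuationSubring K}
    (hB : Minimal (fun B : ValuationSubring K => Set.range i ⊆ B) B) :
    ((residue B).comp (i.codRestrict B fun r => hB.prop ⟨r, rfl⟩)).IsIntegral := by
  set j := (residue B).comp (i.codRestrict B fun r => hB.prop ⟨r, rfl⟩)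
  algebraize [j]
  intro t
  by_contra ht
  obtain ⟨C, hC, htC⟩ := Subring.exists_le_valuationSubring_of_isIntegrallyClosedIn
    (R := (integralClosure R (ResidueField B)).toSubring) ht
  have range_subset : Set.range i ⊆ compositeValuationSubring B C := by
    rintro _ ⟨r, rfl⟩
    exact mem_compositeValuationSubring_iff.2
      ⟨hB.prop ⟨r, rfl⟩, hC ((integralClosure R (ResidueField B)).algebraMap_mem r)⟩
  have composite_le : compositeValuationSubring B C ≤ B := fun x hx =>
    (mem_compositeValuationSubring_iff.1 hx).1
  obtain ⟨b, rfl⟩ := residue_surjective t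
  exact htC (mem_compositeValuationSubring_iff.1 (hB.le_of_le range_subset composite_le b.2)).2

theorem exists_place [IsAlgClosed k] (i : k →+* K) :
    ∃ (B : ValuationSubring K) (φ : B →+* k), ∀ c, ∃ hc : i c ∈ B, φ ⟨i c, hc⟩ = c := by
  obtain ⟨B, hB⟩ := exists_minimal_valuationSubring (Set.range i)
  let e := RingEquiv.ofBijective _
    (IsAlgClosed.ringHom_bijective_of_isIntegral _ (isIntegral_residue_comp_of_minimal hB))
  exact ⟨B, (e.symm : _ →+* k).comp (residue B), fun c => ⟨hB.prop ⟨c, rfl⟩, e.symm_apply_apply c⟩⟩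

theorem exists_forall_div_mem_valuationSubring {κ : Type*} [Finite κ] (B : ValuationSubring K)
    {a : κ → K} (ha : ∃ j, a j ≠ 0) : ∃ j, a j ≠ 0 ∧ ∀ l, a l / a j ∈ B := by
  obtain ⟨j₀, hj₀⟩ := ha
  have : Nonempty κ := ⟨j₀⟩
  obtain ⟨j, hj⟩ := Finite.exists_max fun l => B.valuation (a l)
  have hpos : 0 < B.valuation (a j) :=
    (zero_lt_iff.2 (B.valuation.ne_zero_iff.2 hj₀)).trans_le (hj j₀)
  refine ⟨j, B.valuation.ne_zero_iff.1 hpos.ne', fun l => ?_⟩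
  rw [← B.valuation_le_one_iff, map_div₀]
  exact div_le_one_of_le₀ (hj l) zero_le

end Place

section Limit

variable {k ι V : Type*} [Field k] [AddCommGroup V] [Module k V]

/-- `L` is the graph of a limit operation along the filter `F`, where `(x, c) ∈ L` says that the
family `x` tends to `c`. Not every family of scalars has a limit, but every finite tuple of families
acquires limits, not all zero, on division by one of its members. -/
structure IsLimitGraph (F : Filter ι) (L : Subalgebra k ((ι → k) × k)) : Prop where
  eq_zero : ∀ {x : ι → k} {c : k}, (x, c) ∈ L → (∀ᶠ s in F, x s = 0) → c = 0
  exists_normalization : ∀ {n : ℕ} (a : Fin n → ι → k), (∀ᶠ s in F, ∃ j, a j s ≠ 0) →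
    ∃ (j : Fin n) (c : Fin n → k), c j = 1 ∧ ∀ l, (a l / a j, c l) ∈ L

/-- The limit operation on families of scalars induced by a homomorphism `φ` from a subring of the
ultrapower: `x` tends to the value of `φ` at the germ of `x`. -/
def placeLimitGraph {U : Ultrafilter ι} {B : ValuationSubring ((U : Filter ι).Germ k)}
    (φ : B →+* k)
    (hφ : ∀ c : k, ∃ hc : (Filter.Germ.coeRingHom (U : Filter ι)).comp (Pi.constRingHom ι k) c ∈ B,
      φ ⟨_, hc⟩ = c) : Subalgebra k ((ι → k) × k) where
  __ := (B.subtype.prod φ).range.comap ((Filter.Germ.coeRingHom (U : Filter ι)).prodMap (.id k))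
  algebraMap_mem' c := by
    obtain ⟨hc, hφc⟩ := hφ c
    exact ⟨⟨_, hc⟩, Prod.ext rfl hφc⟩

theorem exists_isLimitGraph [IsAlgClosed k] (U : Ultrafilter ι) :
    ∃ L : Subalgebra k ((ι → k) × k), IsLimitGraph (U : Filter ι) L := by
  obtain ⟨B, φ, hφ⟩ :=
    exists_place ((Filter.Germ.coeRingHom (U : Filter ι)).comp (Pi.constRingHom ι k))
  refine ⟨placeLimitGraph φ hφ, ?_, ?_⟩
  · rintro x c ⟨b, hb⟩ hx
    obtain ⟨hbx, rfl⟩ := Prod.ext_iff.1 hb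
    have hb0 : b = 0 := Subtype.ext (hbx.trans (Filter.Germ.coe_eq.2 hx))
    exact hb0 ▸ map_zero φ
  · intro n a ha
    have exists_germ_ne_zero : ∃ l, (a l : (U : Filter ι).Germ k) ≠ 0 := by
      by_contra! h
      have all_zero : ∀ᶠ s in U, ∀ l, a l s = 0 :=
        Filter.eventually_all.2 fun l => Filter.Germ.coe_eq.1 (h l)
      obtain ⟨s, ⟨l, hl⟩, hs⟩ := (ha.and all_zero).exists
      exact hl (hs l)
    obtain ⟨j, hj, hB⟩ := exists_forall_div_mem_valuationSubring B exists_germ_ne_zero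
    refine ⟨j, fun l => φ ⟨_, hB l⟩, ?_, fun l => ⟨⟨_, hB l⟩, rfl⟩⟩
    rw [← map_one φ]
    exact congrArg φ (Subtype.ext (div_self hj))

/-- The families of vectors with a limit, together with their limits: those obtained by linear
combination from the families `s ↦ x s • v` with limit `c • v`, where the family of scalars `x` has
limit `c` according to `L`. -/
def vectorLimitGraph (L : Subalgebra k ((ι → k) × k)) (V : Type*) [AddCommGroup V] [Module k V] :
    Submodule k ((ι → V) × V) :=
  .span k {p | ∃ x c, (x, c) ∈ L ∧ ∃ v : V, (fun s => x s • v, c • v) = p}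

theorem smul_mem_vectorLimitGraph {L : Subalgebra k ((ι → k) × k)} {x : ι → k} {c : k}
    (hx : (x, c) ∈ L) (v : V) : (fun s => x s • v, c • v) ∈ vectorLimitGraph L V :=
  Submodule.subset_span ⟨x, c, hx, v, rfl⟩

theorem apply_mem_of_mem_vectorLimitGraph {L : Subalgebra k ((ι → k) × k)}
    {g : ι → V →ₗ[k] k} {g' : V →ₗ[k] k} (hg : ∀ v, (fun s => g s v, g' v) ∈ L)
    {p : (ι → V) × V} (hp : p ∈ vectorLimitGraph L V) : (fun s => g s (p.1 s), g' p.2) ∈ L := by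
  induction hp using Submodule.span_induction with
  | mem p hp =>
    obtain ⟨x, c, hx, v, rfl⟩ := hp
    simpa using! L.mul_mem hx (hg v)
  | zero =>
    simp only [Prod.fst_zero, Prod.snd_zero, Pi.zero_apply, map_zero]
    exact L.zero_mem
  | add p q _ _ hp hq => simpa using! L.add_mem hp hq
  | smul c p _ hp => simpa using! L.smul_mem hp c

theorem trilinear_mem_of_mem_vectorLimitGraph {L : Subalgebra k ((ι → k) × k)}
    (T : V →ₗ[k] V →ₗ[k] V →ₗ[k] k) {p q r : (ι → V) × V} (hp : p ∈ vectorLimitGraph L V)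
    (hq : q ∈ vectorLimitGraph L V) (hr : r ∈ vectorLimitGraph L V) :
    (fun s => T (p.1 s) (q.1 s) (r.1 s), T p.2 q.2 r.2) ∈ L :=
  have left (v w : V) : (fun s => T (p.1 s) v w, T p.2 v w) ∈ L :=
    apply_mem_of_mem_vectorLimitGraph (g := fun _ => (T.flip v).flip w) (g' := (T.flip v).flip w)
      (fun u => L.algebraMap_mem (T u v w)) hp
  have middle (w : V) : (fun s => T (p.1 s) (q.1 s) w, T p.2 q.2 w) ∈ L :=
    apply_mem_of_mem_vectorLimitGraph (g := fun s => (T (p.1 s)).flip w) (g' := (T p.2).flip w)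
      (fun v => left v w) hq
  apply_mem_of_mem_vectorLimitGraph middle hr

/-- The limits of families of vectors `x` with `x s ∈ W s` for almost all `s`. -/
def limitSubmodule (F : Filter ι) (L : Subalgebra k ((ι → k) × k)) (W : ι → Submodule k V) :
    Submodule k V where
  carrier := {u | ∃ x, (x, u) ∈ vectorLimitGraph L V ∧ ∀ᶠ s in F, x s ∈ W s}
  zero_mem' := ⟨0, zero_mem _, .of_forall fun s => zero_mem _⟩
  add_mem' := by
    rintro _ _ ⟨x, hx, hxW⟩ ⟨y, hy, hyW⟩
    exact ⟨x + y, add_mem hx hy, hxW.mp (hyW.mono fun s hs hs' => add_mem hs' hs)⟩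
  smul_mem' := by
    rintro c _ ⟨x, hx, hxW⟩
    exact ⟨c • x, Submodule.smul_mem _ c hx, hxW.mono fun s hs => Submodule.smul_mem _ c hs⟩

variable {F : Filter ι} {L : Subalgebra k ((ι → k) × k)} {W : ι → Submodule k V}

theorem trilinear_eq_zero_of_mem_limitSubmodule (hL : IsLimitGraph F L)
    {T : V →ₗ[k] V →ₗ[k] V →ₗ[k] k} (hW : ∀ s, ∀ w ∈ W s, T w w w = 0) {u : V}
    (hu : u ∈ limitSubmodule F L W) : T u u u = 0 := by
  obtain ⟨x, hx, hxW⟩ := hu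
  exact hL.eq_zero (trilinear_mem_of_mem_vectorLimitGraph T hx hx hx)
    (hxW.mono fun s hs => hW s _ hs)

theorem exists_sum_smul_mem_limitSubmodule (hL : IsLimitGraph F L) {n : ℕ} {v : Fin n → V}
    (hv : ∀ᶠ s in F, ∃ a : Fin n → k, a ≠ 0 ∧ ∑ j, a j • v j ∈ W s) :
    ∃ a : Fin n → k, a ≠ 0 ∧ ∑ j, a j • v j ∈ limitSubmodule F L W := by
  choose! a ha using fun s (hs : ∃ a : Fin n → k, a ≠ 0 ∧ ∑ j, a j • v j ∈ W s) => hs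
  obtain ⟨j, c, hcj, hc⟩ := hL.exists_normalization (fun l s => a s l)
    (hv.mono fun s hs => Function.ne_iff.1 (ha s hs).1)
  refine ⟨c, fun h => by simp [h] at hcj, fun s => ∑ l, (a s l / a s j) • v l, ?_, ?_⟩
  · convert sum_mem fun l (_ : l ∈ Finset.univ) => smul_mem_vectorLimitGraph (hc l) (v l) using 1
    ext <;> simp [Prod.fst_sum, Prod.snd_sum]
  · filter_upwards [hv] with s hs
    convert (W s).smul_mem (a s j)⁻¹ (ha s hs).2 using 1
    simp only [Finset.smul_sum, smul_smul, div_eq_inv_mul]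

end Limit

section Codimension

variable {k V : Type*} [Field k] [AddCommGroup V] [Module k V]

theorem rank_quotient_le_iff_forall_exists_sum_smul_mem {W : Submodule k V} {r : ℕ} :
    Module.rank k (V ⧸ W) ≤ r ↔
      ∀ v : Fin (r + 1) → V, ∃ a : Fin (r + 1) → k, a ≠ 0 ∧ ∑ j, a j • v j ∈ W := by
  have dependent_iff (v : Fin (r + 1) → V) : ¬ LinearIndependent k (W.mkQ ∘ v) ↔
      ∃ a : Fin (r + 1) → k, a ≠ 0 ∧ ∑ j, a j • v j ∈ W := by
    simp only [Fintype.not_linearIndependent_iff, Function.comp_apply, ← map_smul, ← map_sum,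
      ← LinearMap.mem_ker, Submodule.ker_mkQ, Function.ne_iff, Pi.zero_apply, and_comm]
  simp only [← dependent_iff]
  rw [← not_lt, ← Cardinal.natCast_add_one_le_iff, ← Nat.cast_add_one, natCast_le_rank_iff,
    not_exists, W.mkQ_surjective.comp_left.forall]

theorem rank_quotient_limitSubmodule_le {ι : Type*} {F : Filter ι}
    {L : Subalgebra k ((ι → k) × k)} (hL : IsLimitGraph F L) {W : ι → Submodule k V} {r : ℕ}
    (hW : ∀ v : Fin (r + 1) → V, ∀ᶠ s in F, ∃ a : Fin (r + 1) → k,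
      a ≠ 0 ∧ ∑ j, a j • v j ∈ W s) :
    Module.rank k (V ⧸ limitSubmodule F L W) ≤ r :=
  rank_quotient_le_iff_forall_exists_sum_smul_mem.2 fun v =>
    exists_sum_smul_mem_limitSubmodule hL (hW v)

theorem exists_forall_sub_sum_smul_mem (W : Submodule k V) [Module.Finite k (V ⧸ W)] :
    ∃ (ℓ : Fin (Module.finrank k (V ⧸ W)) → V →ₗ[k] k) (e : Fin (Module.finrank k (V ⧸ W)) → V),
      ∀ v, v - ∑ j, ℓ j v • e j ∈ W := by
  let b := Module.finBasis k (V ⧸ W)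
  choose e he using fun j => W.mkQ_surjective (b j)
  refine ⟨fun j => b.coord j ∘ₗ W.mkQ, e, fun v => ?_⟩
  rw [← Submodule.Quotient.mk_eq_zero, ← W.mkQ_apply, map_sub, map_sum, sub_eq_zero]
  simp only [map_smul, he]
  exact (b.sum_repr (W.mkQ v)).symm

end Codimension

section QRank

variable {k V : Type*} [Field k] [AddCommGroup V] [Module k V]

theorem qrank_le_natCast_iff {f : V → k} {r : ℕ} :
    qrank k f ≤ r ↔ ∃ m ≤ r, ∃ (ℓ : Fin m → (V →ₗ[k] k)) (q : Fin m → QuadraticForm k V),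
      ∀ v, f v = ∑ i, ℓ i v * q i v := by
  constructor
  · intro h
    obtain ⟨_, ⟨m, rfl, hm⟩, hmr⟩ :=
      sInf_lt_iff.1 (h.trans_lt (ENat.natCast_lt_natCast.2 r.lt_succ_self))
    exact ⟨m, Nat.lt_succ_iff.1 (ENat.natCast_lt_natCast.1 hmr), hm⟩
  · rintro ⟨m, hmr, hm⟩
    exact sInf_le_of_le ⟨m, rfl, hm⟩ (Nat.cast_le.2 hmr)

theorem qrank_comp_linearMap_le {V' : Type*} [AddCommGroup V'] [Module k V'] (f : V → k)
    (g : V' →ₗ[k] V) : qrank k (f ∘ g) ≤ qrank k f := by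
  apply sInf_le_sInf
  rintro _ ⟨m, rfl, ℓ, q, hf⟩
  exact ⟨m, rfl, fun i => ℓ i ∘ₗ g, fun i => (q i).comp g, fun v => hf (g v)⟩

theorem exists_rank_quotient_le_of_qrank_le {f : V → k} {r : ℕ} (hf : qrank k f ≤ r) :
    ∃ W : Submodule k V, Module.rank k (V ⧸ W) ≤ r ∧ ∀ w ∈ W, f w = 0 := by
  obtain ⟨m, hmr, ℓ, q, hf⟩ := qrank_le_natCast_iff.1 hf
  refine ⟨(LinearMap.pi ℓ).ker, ?_, fun w hw => ?_⟩
  · have hle := LinearMap.lift_rank_le_of_injective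
      ((LinearMap.pi ℓ).ker.liftQ (LinearMap.pi ℓ) le_rfl)
      (LinearMap.ker_eq_bot.1 (Submodule.ker_liftQ_eq_bot _ _ _ le_rfl))
    rw [rank_fin_fun, Cardinal.lift_natCast, Cardinal.lift_le_nat_iff] at hle
    exact hle.trans (Nat.cast_le.2 hmr)
  · rw [LinearMap.ker_pi, Submodule.mem_iInf] at hw
    simp [hf, fun i => LinearMap.mem_ker.1 (hw i)]

theorem qrank_trilinear_le_of_sub_sum_smul_mem {T : V →ₗ[k] V →ₗ[k] V →ₗ[k] k}
    {W : Submodule k V} (hW : ∀ w ∈ W, T w w w = 0) {m : ℕ} {ℓ : Fin m → V →ₗ[k] k}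
    {e : Fin m → V} (he : ∀ v, v - ∑ j, ℓ j v • e j ∈ W) : qrank k (fun v => T v v v) ≤ m := by
  let p : V →ₗ[k] V := .id - ∑ j, (ℓ j).smulRight (e j)
  have sub_p (v : V) : v - p v = ∑ j, ℓ j v • e j := by simp [p]
  have p_mem (v : V) : p v ∈ W := by simpa [p] using he v
  let q (j : Fin m) : QuadraticForm k V :=
    LinearMap.BilinMap.toQuadraticMap (T (e j)) +
    LinearMap.BilinMap.toQuadraticMap (T.flip (e j) ∘ₗ p) +
    LinearMap.BilinMap.toQuadraticMap ((T.compr₂ (LinearMap.applyₗ (e j))).compl₁₂ p p)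
  refine qrank_le_natCast_iff.2 ⟨m, le_rfl, ℓ, q, fun v => ?_⟩
  calc T v v v
      = T (v - p v) v v + T (p v) (v - p v) v + T (p v) (p v) (v - p v) + T (p v) (p v) (p v) := by
        simp only [map_sub, LinearMap.sub_apply]
        ring
    _ = ∑ j, ℓ j v * q j v := by
        rw [hW _ (p_mem v), add_zero, sub_p]
        simp only [map_sum, map_smul, LinearMap.sum_apply, LinearMap.smul_apply, smul_eq_mul,
          ← Finset.sum_add_distrib, ← mul_add]
        rfl

theorem qrank_trilinear_le_iff {T : V →ₗ[k] V →ₗ[k] V →ₗ[k] k} {r : ℕ} :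
    qrank k (fun v => T v v v) ≤ r ↔
      ∃ W : Submodule k V, Module.rank k (V ⧸ W) ≤ r ∧ ∀ w ∈ W, T w w w = 0 := by
  refine ⟨exists_rank_quotient_le_of_qrank_le, fun ⟨W, hr, hW⟩ => ?_⟩
  have : Module.Finite k (V ⧸ W) :=
    Module.rank_lt_aleph0_iff.1 (hr.trans_lt Cardinal.natCast_lt_aleph0)
  obtain ⟨ℓ, e, he⟩ := exists_forall_sub_sum_smul_mem W
  exact (qrank_trilinear_le_of_sub_sum_smul_mem hW he).trans
    (Nat.cast_le.2 (Module.finrank_le_of_rank_le hr))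

end QRank

section DirectedUnion

variable {k V I : Type*} [Field k] [AddCommGroup V] [Module k V] [Nonempty I]
  {𝒱 : I → Submodule k V}

theorem exists_ultrafilter_forall_eventually_mem (hdir : Directed (· ≤ ·) 𝒱) (hsup : iSup 𝒱 = ⊤) :
    ∃ U : Ultrafilter I, ∀ v, ∀ᶠ i in (U : Filter I), v ∈ 𝒱 i := by
  let F : Filter I := ⨅ i, .principal {j | 𝒱 i ≤ 𝒱 j}
  have : F.NeBot := by
    refine Filter.iInf_neBot_of_directed' (fun i j => ?_) fun i =>
      Filter.principal_neBot_iff.2 ⟨i, le_refl (𝒱 i)⟩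
    obtain ⟨m, hi, hj⟩ := hdir i j
    exact ⟨m, Filter.principal_mono.2 fun l => hi.trans, Filter.principal_mono.2 fun l => hj.trans⟩
  refine ⟨.of F, fun v => Ultrafilter.of_le F ?_⟩
  have hv : v ∈ iSup 𝒱 := hsup ▸ Submodule.mem_top
  obtain ⟨i, hi⟩ := (Submodule.mem_iSup_of_directed 𝒱 hdir).1 hv
  exact Filter.mem_iInf_of_mem i fun j hj => hj hi

theorem exists_rank_quotient_le_of_directed [IsAlgClosed k] (hdir : Directed (· ≤ ·) 𝒱)
    (hsup : iSup 𝒱 = ⊤) {T : V →ₗ[k] V →ₗ[k] V →ₗ[k] k} {r : ℕ}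
    (h : ∀ i, ∃ W : Submodule k (𝒱 i), Module.rank k (𝒱 i ⧸ W) ≤ r ∧ ∀ w ∈ W, T w w w = 0) :
    ∃ W : Submodule k V, Module.rank k (V ⧸ W) ≤ r ∧ ∀ w ∈ W, T w w w = 0 := by
  choose W hWr hW using h
  obtain ⟨U, hU⟩ := exists_ultrafilter_forall_eventually_mem hdir hsup
  obtain ⟨L, hL⟩ := exists_isLimitGraph (k := k) U
  let W' (i : I) : Submodule k V := (W i).map (𝒱 i).subtype
  have relation (v : Fin (r + 1) → V) :
      ∀ᶠ i in (U : Filter I), ∃ a : Fin (r + 1) → k, a ≠ 0 ∧ ∑ j, a j • v j ∈ W' i := by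
    filter_upwards [Filter.eventually_all.2 fun j => hU (v j)] with i hi
    obtain ⟨a, ha, haW⟩ :=
      rank_quotient_le_iff_forall_exists_sum_smul_mem.1 (hWr i) fun j => ⟨v j, hi j⟩
    exact ⟨a, ha, _, haW, by simp⟩
  have vanishing (i : I) : ∀ w ∈ W' i, T w w w = 0 := by
    rintro _ ⟨w, hw, rfl⟩
    exact hW i w hw
  exact ⟨limitSubmodule (U : Filter I) L W', rank_quotient_limitSubmodule_le hL relation,
    fun w hw => trilinear_eq_zero_of_mem_limitSubmodule hL vanishing hw⟩

theorem qrank_directed_union_general [IsAlgClosed k] (hdir : Directed (· ≤ ·) 𝒱)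
    (hsup : iSup 𝒱 = ⊤) (T : V →ₗ[k] V →ₗ[k] V →ₗ[k] k) :
    qrank k (fun v => T v v v) = ⨆ i, qrank k (fun w : 𝒱 i => T w w w) := by
  refine le_antisymm ?_ (iSup_le fun i => qrank_comp_linearMap_le _ (𝒱 i).subtype)
  refine WithTop.forall_le_coe_iff_le.1 fun r hr => ?_
  have vanishing (i : I) :
      ∃ W : Submodule k (𝒱 i), Module.rank k (𝒱 i ⧸ W) ≤ r ∧ ∀ w ∈ W, T w w w = 0 :=
    exists_rank_quotient_le_of_qrank_le (f := fun w : 𝒱 i => T w w w) (iSup_le_iff.1 hr i)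
  exact qrank_trilinear_le_iff.2 (exists_rank_quotient_le_of_directed hdir hsup vanishing)

end DirectedUnion

/-- Q-rank over a directed union of subspaces. -/
theorem qrank_directed_union {k : Type*} [Field k] [IsAlgClosed k]
    (h2 : (2 : k) ≠ 0) (h3 : (3 : k) ≠ 0)
    {V : Type*} [AddCommGroup V] [Module k V]
    {I : Type*} [Nonempty I] (𝒱 : I → Submodule k V)
    (hdir : Directed (· ≤ ·) 𝒱) (hsup : iSup 𝒱 = ⊤)
    (f : V → k) (hf : IsCubicForm k f) :
    qrank k f = ⨆ i, qrank k (fun w : 𝒱 i => f w) := by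
  obtain ⟨T, -, -, hT⟩ := hf
  obtain rfl : f = fun v => T v v v := funext hT
  exact qrank_directed_union_general hdir hsup T
end

section
/- Minrank from maxrank: let V be a finite-dimensional vector space over a field k of characteristic ≠ 2, let Q be a linear subspace of the space of quadratic forms on V, and let r be a positive integer. Suppose that for every linear subspace Q' ⊆ Q there exists q ∈ Q' with dim(Q/Q') + rank(q) ≥ r. Let a and s be positive integers satisfying (2^a − 1)(s − 1) + a ≤ r. Then there exists an a-dimensional linear subspace Q' ⊆ Q such that every nonzero element of Q' has rank at least s. -/
open scoped BigOperators

/-- The rank of a quadratic form: `dim V` minus the dimension of its radical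
(the kernel of the polar bilinear form). -/
noncomputable def quadRank {k V : Type*} [Field k] [AddCommGroup V] [Module k V]
    (q : QuadraticForm k V) : ℕ :=
  Module.finrank k V - Module.finrank k (LinearMap.ker (QuadraticMap.polarBilin q))

/-!
The argument only uses that the rank is subadditive and does not grow under scaling. Put
`t = s - 1`, let `S` be the set of elements of `Q` of rank at most `t`, and let `p ∈ span S` be the
element supplied by the hypothesis for `Q' = span S`.

If `rank p ≤ (2 ^ a - 1) * t`, then `span S` has codimension at least `a` in `Q`, and any
`a`-dimensional subspace of a complement of `span S` works, since it meets `S` only in `0`.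

Otherwise write `p` as a sum of multiples of elements of `S`. The ranks of the partial sums go up by
at most `t` at a time, so each window `(n, n + t]` with `n ≤ (2 ^ a - 1) * t` contains the rank of
an element of `span S`. Build the subspace one generator at a time: if all ranks in `W` are at most
`B` and `B + t < rank q ≤ B + 2 * t`, then `w + c • q` with `w ∈ W` and `c ≠ 0` has rank greater
than `t`, and all ranks in `W ⊔ span {q}` are at most `2 * B + 2 * t`. Starting from `B = 0`, this
gives `B = (2 ^ b - 1) * (2 * t)` in dimension `b`, so `a` steps stay within the available windows.
-/

open Module Submodule

section Dimension

variable {k M : Type*} [DivisionRing k] [AddCommGroup M] [Module k M]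

theorem finrank_sup_eq_add_of_disjoint {U W : Submodule k M} [FiniteDimensional k U]
    [FiniteDimensional k W] (h : Disjoint U W) :
    finrank k ↥(U ⊔ W) = finrank k U + finrank k W := by
  rw [← finrank_sup_add_finrank_inf_eq, h.eq_bot, finrank_bot, add_zero]

theorem exists_submodule_le_finrank_eq {C : Submodule k M} {a : ℕ} (h : a ≤ finrank k C) :
    ∃ W ≤ C, finrank k W = a := by
  obtain ⟨v, hv⟩ := exists_linearIndependent_of_le_finrank h
  have hv' : LinearIndependent k (C.subtype ∘ v) := hv.map' C.subtype C.ker_subtype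
  refine ⟨span k (Set.range (C.subtype ∘ v)), span_le.2 ?_, ?_⟩
  · rintro _ ⟨i, rfl⟩
    exact (v i).2
  · rw [finrank_span_eq_card hv', Fintype.card_fin]

theorem exists_submodule_le_finrank_eq_disjoint {L Q : Submodule k M} [FiniteDimensional k Q]
    (hLQ : L ≤ Q) {a : ℕ} (h : finrank k L + a ≤ finrank k Q) :
    ∃ W ≤ Q, finrank k W = a ∧ Disjoint L W := by
  obtain ⟨C, hLC, rfl⟩ := IsModularLattice.exists_disjoint_and_sup_eq hLQ
  have : FiniteDimensional k L := finiteDimensional_of_le hLQ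
  have : FiniteDimensional k C := finiteDimensional_of_le (le_sup_right : C ≤ L ⊔ C)
  rw [finrank_sup_eq_add_of_disjoint hLC, add_le_add_iff_left] at h
  obtain ⟨W, hWC, hWa⟩ := exists_submodule_le_finrank_eq h
  exact ⟨W, hWC.trans le_sup_right, hWa, hLC.mono_right hWC⟩

end Dimension

/-- A rank function on a module: a natural-number-valued function that vanishes at `0`, is
subadditive and does not increase under scalar multiplication. Over a division ring it is thus
invariant under nonzero scalars; nonzero elements of rank `0` are allowed, as for quadratic forms
in characteristic `2`. -/
structure IsRankFunction (k : Type*) {M : Type*} [Semiring k] [AddCommMonoid M] [Module k M]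
    (rk : M → ℕ) : Prop where
  map_zero : rk 0 = 0
  map_add_le : ∀ x y, rk (x + y) ≤ rk x + rk y
  map_smul_le : ∀ (c : k) x, rk (c • x) ≤ rk x

namespace IsRankFunction

theorem exists_mem_span_lt_and_le {k M : Type*} [Semiring k] [AddCommMonoid M] [Module k M]
    {rk : M → ℕ} (h : IsRankFunction k rk) {S : Set M} {t : ℕ} (hS : ∀ x ∈ S, rk x ≤ t)
    {p : M} (hp : p ∈ span k S) {n : ℕ} (hn : n < rk p) :
    ∃ q ∈ span k S, n < rk q ∧ rk q ≤ n + t := by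
  rw [← mem_toAddSubmonoid, span_eq_closure] at hp
  induction hp using AddSubmonoid.closure_induction_left with
  | zero => exact absurd hn (by simp [h.map_zero])
  | add_left x hx y hy ih =>
    obtain ⟨c, -, z, hz, rfl⟩ := hx
    rcases lt_or_ge n (rk y) with hny | hyn
    · exact ih hny
    · rw [← span_eq_closure, mem_toAddSubmonoid] at hy
      refine ⟨c • z + y, add_mem (smul_mem _ c (subset_span hz)) hy, hn, ?_⟩
      calc rk (c • z + y) ≤ rk (c • z) + rk y := h.map_add_le _ _
        _ ≤ t + n := add_le_add ((h.map_smul_le c z).trans (hS z hz)) hyn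
        _ = n + t := add_comm t n

variable {k M : Type*} [DivisionRing k] [AddCommGroup M] [Module k M] {rk : M → ℕ}

theorem map_le_map_add_smul_add_map (h : IsRankFunction k rk) {c : k} (hc : c ≠ 0) (w q : M) :
    rk q ≤ rk (w + c • q) + rk w :=
  calc rk q = rk (c⁻¹ • ((w + c • q) + (-1 : k) • w)) := by
        rw [neg_one_smul, add_neg_cancel_comm, inv_smul_smul₀ hc]
    _ ≤ rk ((w + c • q) + (-1 : k) • w) := h.map_smul_le _ _
    _ ≤ rk (w + c • q) + rk ((-1 : k) • w) := h.map_add_le _ _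
    _ ≤ rk (w + c • q) + rk w := by gcongr; exact h.map_smul_le _ _

theorem map_le_of_mem_sup_span_singleton (h : IsRankFunction k rk) {W : Submodule k M} {B : ℕ}
    (hB : ∀ w ∈ W, rk w ≤ B) {p q : M} (hp : p ∈ W ⊔ span k {q}) : rk p ≤ B + rk q := by
  obtain ⟨w, hw, z, hz, rfl⟩ := mem_sup.1 hp
  obtain ⟨c, rfl⟩ := mem_span_singleton.1 hz
  exact (h.map_add_le _ _).trans (add_le_add (hB w hw) (h.map_smul_le c q))

theorem lt_map_of_mem_sup_span_singleton (h : IsRankFunction k rk) {W : Submodule k M} {B t : ℕ}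
    (hB : ∀ w ∈ W, rk w ≤ B) (ht : ∀ w ∈ W, w ≠ 0 → t < rk w) {q : M} (hq : B + t < rk q)
    {p : M} (hp : p ∈ W ⊔ span k {q}) (hp0 : p ≠ 0) : t < rk p := by
  obtain ⟨w, hw, z, hz, rfl⟩ := mem_sup.1 hp
  obtain ⟨c, rfl⟩ := mem_span_singleton.1 hz
  rcases eq_or_ne c 0 with rfl | hc
  · rw [zero_smul, add_zero] at hp0 ⊢
    exact ht w hw hp0
  · have hqw := h.map_le_map_add_smul_add_map hc w q
    have hwB := hB w hw
    omega

theorem exists_submodule_le_span_finrank_eq_of_lt_map (h : IsRankFunction k rk) {S : Set M}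
    [FiniteDimensional k (span k S)] {t : ℕ} (hS : ∀ x ∈ S, rk x ≤ t) {p : M}
    (hp : p ∈ span k S) {a : ℕ} (hlt : (2 ^ a - 1) * t < rk p) :
    ∃ W ≤ span k S, finrank k W = a ∧ (∀ w ∈ W, w ≠ 0 → t < rk w) ∧
      ∀ w ∈ W, rk w ≤ (2 ^ a - 1) * (2 * t) := by
  induction a with
  | zero =>
    refine ⟨⊥, bot_le, finrank_bot k M, fun w hw hw0 => absurd ((mem_bot k).1 hw) hw0, ?_⟩
    intro w hw
    simp [(mem_bot k).1 hw, h.map_zero]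
  | succ b ih =>
    have hpow : 2 ^ (b + 1) - 1 = 2 * (2 ^ b - 1) + 1 := by
      have := Nat.one_le_two_pow (n := b)
      omega
    rw [hpow] at hlt ⊢
    generalize 2 ^ b - 1 = m at hlt ih ⊢
    obtain ⟨W, hWS, hWb, hWt, hWB⟩ := ih (by nlinarith)
    obtain ⟨q, hqS, hq_lt, hq_le⟩ := h.exists_mem_span_lt_and_le hS hp
      (n := m * (2 * t) + t) (by linarith)
    have hqW : q ∉ W := fun hq => by linarith [hWB q hq]
    have hq0 : q ≠ 0 := fun hq => hqW (hq ▸ W.zero_mem)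
    have : FiniteDimensional k W := finiteDimensional_of_le hWS
    refine ⟨W ⊔ span k {q}, sup_le hWS ((span_singleton_le_iff_mem q _).2 hqS), ?_,
      fun w => h.lt_map_of_mem_sup_span_singleton hWB hWt hq_lt, fun w hw => ?_⟩
    · rw [finrank_sup_eq_add_of_disjoint (disjoint_span_singleton_of_notMem hqW),
        finrank_span_singleton hq0, hWb]
    · linarith [h.map_le_of_mem_sup_span_singleton hWB hw]

end IsRankFunction

section QuadraticForm

variable {R M N : Type*} [CommRing R] [AddCommGroup M] [Module R M] [AddCommGroup N] [Module R N]

theorem polarBilin_add (p q : QuadraticMap R M N) :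
    (p + q).polarBilin = p.polarBilin + q.polarBilin := by
  ext x y
  exact QuadraticMap.polar_add p q x y

theorem polarBilin_smul (c : R) (q : QuadraticMap R M N) :
    (c • q).polarBilin = c • q.polarBilin := by
  ext x y
  exact QuadraticMap.polar_smul q c x y

variable (R M N) in
theorem finite_quadraticMap [Module.Free R M] [Module.Finite R M] [Module.Finite R N] :
    Module.Finite R (QuadraticMap R M N) :=
  .of_surjective (LinearMap.BilinMap.toQuadraticMapLinearMap R R M)
    LinearMap.BilinMap.toQuadraticMap_surjective

variable {k V : Type*} [Field k] [AddCommGroup V] [Module k V] [FiniteDimensional k V]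

theorem quadRank_eq_finrank_range (q : QuadraticForm k V) :
    quadRank q = finrank k (LinearMap.range q.polarBilin) := by
  rw [quadRank, ← LinearMap.finrank_range_add_finrank_ker q.polarBilin, Nat.add_sub_cancel]

theorem quadRank_add_le (p q : QuadraticForm k V) :
    quadRank (p + q) ≤ quadRank p + quadRank q := by
  rw [quadRank_eq_finrank_range, quadRank_eq_finrank_range p, quadRank_eq_finrank_range q,
    polarBilin_add]
  exact (finrank_mono (LinearMap.range_add_le _ _)).trans
    (finrank_add_le_finrank_add_finrank _ _)

theorem quadRank_smul_le (c : k) (q : QuadraticForm k V) : quadRank (c • q) ≤ quadRank q := by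
  rw [quadRank_eq_finrank_range, quadRank_eq_finrank_range q, polarBilin_smul]
  exact finrank_mono (LinearMap.range_smul_le_range _ _)

variable (k V) in
theorem isRankFunction_quadRank : IsRankFunction k (quadRank : QuadraticForm k V → ℕ) where
  map_zero := by
    rw [quadRank_eq_finrank_range, ← zero_smul k (0 : QuadraticForm k V), polarBilin_smul,
      zero_smul, LinearMap.range_zero, finrank_bot]
  map_add_le := quadRank_add_le
  map_smul_le := quadRank_smul_le

end QuadraticForm

theorem minrank_from_maxrank_general {k M : Type*} [DivisionRing k] [AddCommGroup M] [Module k M]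
    {rk : M → ℕ} (hrk : IsRankFunction k rk) (Q : Submodule k M) [FiniteDimensional k Q] (r : ℕ)
    (hmax : ∀ Q' ≤ Q, ∃ p ∈ Q', r ≤ (finrank k Q - finrank k Q') + rk p)
    (a t : ℕ) (hineq : (2 ^ a - 1) * t + a ≤ r) :
    ∃ Q' ≤ Q, finrank k Q' = a ∧ ∀ p ∈ Q', p ≠ 0 → t < rk p := by
  let S : Set M := {q ∈ Q | rk q ≤ t}
  have hSQ : span k S ≤ Q := span_le.2 fun q hq => hq.1
  have : FiniteDimensional k (span k S) := finiteDimensional_of_le hSQ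
  obtain ⟨p, hpS, hp⟩ := hmax (span k S) hSQ
  rcases lt_or_ge ((2 ^ a - 1) * t) (rk p) with hlt | hle
  · obtain ⟨W, hWS, hWa, hWt, -⟩ :=
      hrk.exists_submodule_le_span_finrank_eq_of_lt_map (fun q hq => hq.2) hpS hlt
    exact ⟨W, hWS.trans hSQ, hWa, hWt⟩
  · have hcodim : finrank k (span k S) + a ≤ finrank k Q := by
      have := finrank_mono hSQ
      omega
    obtain ⟨W, hWQ, hWa, hdisj⟩ := exists_submodule_le_finrank_eq_disjoint hSQ hcodim
    refine ⟨W, hWQ, hWa, fun q hq hq0 => ?_⟩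
    by_contra! hqt
    exact hq0 (disjoint_def.1 hdisj q (subset_span ⟨hWQ hq, hqt⟩) hq)

/-- Minrank from maxrank: if every subspace `Q' ⊆ Q` contains a form `q` with
`dim(Q/Q') + rank(q) ≥ r`, and `(2^a - 1)(s - 1) + a ≤ r`, then `Q` contains an
`a`-dimensional subspace all of whose nonzero elements have rank at least `s`. -/
theorem minrank_from_maxrank {k : Type*} [Field k]
    (h2 : (2 : k) ≠ 0)
    {V : Type*} [AddCommGroup V] [Module k V] [FiniteDimensional k V]
    (Q : Submodule k (QuadraticForm k V)) (r : ℕ) (hr : 0 < r)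
    (hmax : ∀ Q' ≤ Q, ∃ p ∈ Q',
      r ≤ (Module.finrank k Q - Module.finrank k Q') + quadRank p)
    (a s : ℕ) (ha : 0 < a) (hs : 0 < s)
    (hineq : (2 ^ a - 1) * (s - 1) + a ≤ r) :
    ∃ Q' ≤ Q, Module.finrank k Q' = a ∧
      ∀ p ∈ Q', p ≠ 0 → s ≤ quadRank p := by
  have := finite_quadraticMap k V k
  obtain ⟨W, hWQ, hWa, hW⟩ :=
    minrank_from_maxrank_general (isRankFunction_quadRank k V) Q r hmax a (s - 1) hineq
  exact ⟨W, hWQ, hWa, fun p hp hp0 => Nat.le_of_pred_lt (hW p hp hp0)⟩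
end
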